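/- arXiv:math/0002030 — 2 statements merged into one kernel-verified Lean document; each statement's English description precedes it below -/
import Mathlib

section
/- Let V be a finite-dimensional complex vector space and N : V → V a nonzero nilpotent endomorphism. Then there exists a unique increasing filtration W(N)_{-k} ⊆ ... ⊆ W(N)_k = V (the monodromy weight filtration) such that N maps W(N)_j into W(N)_{j-2} for each j, and the induced maps N^j : Gr^{W(N)}_j → Gr^{W(N)}_{-j} are isomorphisms for all j ≥ 0. -/
/-!
The subspaces `N ^ a (ker (N ^ (2 * a + k + 1)))`, for `a : ℕ`, span the `k`-th step of a weight
filtration: in a Jordan block of size `s` generated by `y`, the vector `N ^ a y` has to get weight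
`k = s - 1 - 2 * a`, and `y` lies in `ker (N ^ s)`.

For uniqueness, the isomorphisms of graded pieces force `W (-j) = N ^ j (W j)` and
`W (j - 1) = (N ^ j)⁻¹ (W (-j - 1))`. So `W (j + 1)` and `W (-j - 2)` determine `W j` and
`W (-j - 1)`, and far from `0` the filtration is `⊤` or `⊥`.
-/

variable {V : Type*} [AddCommGroup V] [Module ℂ V]

/-- The defining properties of the monodromy weight filtration of a nilpotent
endomorphism: an increasing, bounded (exhaustive and separated) filtration such that
`N` maps `W j` into `W (j-2)` and the induced maps
`N^j : Gr_j → Gr_{-j}` are isomorphisms (expressed here as injectivity and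
surjectivity on graded pieces). -/
def IsMonodromyWeightFiltration (N : Module.End ℂ V) (W : ℤ → Submodule ℂ V) : Prop :=
  Monotone W ∧
  (∃ d : ℕ, (∀ j : ℤ, j < -(d : ℤ) → W j = ⊥) ∧ (∀ j : ℤ, (d : ℤ) ≤ j → W j = ⊤)) ∧
  (∀ j : ℤ, (W j).map N ≤ W (j - 2)) ∧
  (∀ j : ℕ, ∀ v ∈ W (j : ℤ), (N ^ j) v ∈ W (-(j : ℤ) - 1) → v ∈ W ((j : ℤ) - 1)) ∧
  (∀ j : ℕ, ∀ v ∈ W (-(j : ℤ)), ∃ u ∈ W (j : ℤ), (N ^ j) u - v ∈ W (-(j : ℤ) - 1))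

section

variable {R M : Type*} [Ring R] [AddCommGroup M] [Module R M]

/-- The monodromy weight filtration, centred at `0`, of an endomorphism of a module over an
arbitrary ring. As in `IsMonodromyWeightFiltration`, the isomorphisms `N ^ j : Gr_j → Gr_{-j}`
are encoded on representatives, as injectivity and surjectivity. -/
structure IsWeightFiltration (N : Module.End R M) (W : ℤ → Submodule R M) : Prop where
  monotone : Monotone W
  bounded : ∃ d : ℕ, (∀ j : ℤ, j < -(d : ℤ) → W j = ⊥) ∧ (∀ j : ℤ, (d : ℤ) ≤ j → W j = ⊤)
  map_le (j : ℤ) : (W j).map N ≤ W (j - 2)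
  mem_of_pow_apply_mem (j : ℕ) :
    ∀ v ∈ W (j : ℤ), (N ^ j) v ∈ W (-(j : ℤ) - 1) → v ∈ W ((j : ℤ) - 1)
  exists_pow_apply_sub_mem (j : ℕ) :
    ∀ v ∈ W (-(j : ℤ)), ∃ u ∈ W (j : ℤ), (N ^ j) u - v ∈ W (-(j : ℤ) - 1)

namespace IsWeightFiltration

variable {N : Module.End R M} {W W' : ℤ → Submodule R M}

theorem map_pow_le (h : IsWeightFiltration N W) (m : ℕ) (k : ℤ) :
    (W k).map (N ^ m) ≤ W (k - 2 * m) := by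
  induction m with
  | zero => simp [Module.End.one_eq_id]
  | succ m ih =>
    calc (W k).map (N ^ (m + 1)) = ((W k).map (N ^ m)).map N := by
          rw [pow_succ', Module.End.mul_eq_comp, Submodule.map_comp]
      _ ≤ (W (k - 2 * m)).map N := Submodule.map_mono ih
      _ ≤ W (k - 2 * m - 2) := h.map_le _
      _ = W (k - 2 * (m + 1 : ℕ)) := by push_cast; ring_nf

theorem pow_apply_mem (h : IsWeightFiltration N W) (m : ℕ) {k l : ℤ} (hkl : k - 2 * m ≤ l) {v : M}
    (hv : v ∈ W k) : (N ^ m) v ∈ W l :=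
  h.monotone hkl (h.map_pow_le m k (Submodule.mem_map_of_mem hv))

theorem comap_pow_le (h : IsWeightFiltration N W) (j : ℕ) :
    (W (-(j : ℤ) - 1)).comap (N ^ j) ≤ W ((j : ℤ) - 1) := by
  obtain ⟨d, -, h_top⟩ := h.bounded
  obtain ⟨n, hjn, hdn⟩ := exists_ge_ge j (d + 1)
  induction hjn using Nat.decreasingInduction with
  | self => rw [h_top (n - 1) (by omega)]; exact le_top
  | of_succ j _ ih =>
    intro v (hv : (N ^ j) v ∈ W (-(j : ℤ) - 1))
    have hv_succ : (N ^ (j + 1)) v ∈ W (-((j + 1 : ℕ) : ℤ) - 1) := by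
      rw [pow_succ', Module.End.mul_apply]
      simpa using h.pow_apply_mem 1 (by push_cast; omega) hv
    have hvj : v ∈ W (j : ℤ) := by simpa using ih hv_succ
    exact h.mem_of_pow_apply_mem j v hvj hv

theorem eq_comap_pow (h : IsWeightFiltration N W) (j : ℕ) :
    W ((j : ℤ) - 1) = (W (-(j : ℤ) - 1)).comap (N ^ j) :=
  le_antisymm (fun _ hv => h.pow_apply_mem j (by omega) hv) (h.comap_pow_le j)

theorem le_map_pow (h : IsWeightFiltration N W) (j : ℕ) :
    W (-(j : ℤ)) ≤ (W (j : ℤ)).map (N ^ j) := by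
  obtain ⟨d, h_bot, -⟩ := h.bounded
  obtain ⟨n, hjn, hdn⟩ := exists_ge_ge j (d + 1)
  induction hjn using Nat.decreasingInduction with
  | self => rw [h_bot _ (by omega)]; exact bot_le
  | of_succ j _ ih =>
    intro v hv
    obtain ⟨u, hu, huv⟩ := h.exists_pow_apply_sub_mem j v hv
    obtain ⟨w, hw, hw_eq⟩ : (N ^ j) u - v ∈ (W ((j + 1 : ℕ) : ℤ)).map (N ^ (j + 1)) :=
      ih (by rwa [Nat.cast_succ, neg_add'])
    have hNw : N w ∈ W (j : ℤ) := by
      simpa using h.pow_apply_mem 1 (l := j) (by push_cast; omega) hw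
    refine ⟨u - N w, sub_mem hu hNw, ?_⟩
    rw [map_sub, ← Module.End.mul_apply, ← pow_succ, hw_eq, sub_sub_cancel]

theorem eq_map_pow (h : IsWeightFiltration N W) (j : ℕ) :
    W (-(j : ℤ)) = (W (j : ℤ)).map (N ^ j) :=
  le_antisymm (h.le_map_pow j)
    (Submodule.map_le_iff_le_comap.2 fun _ hv => h.pow_apply_mem j (by omega) hv)

theorem eq_natCast_and_eq_neg_succ (h : IsWeightFiltration N W) (h' : IsWeightFiltration N W')
    (j : ℕ) : W j = W' j ∧ W (-(j + 1)) = W' (-(j + 1)) := by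
  obtain ⟨d, h_bot, h_top⟩ := h.bounded
  obtain ⟨d', h_bot', h_top'⟩ := h'.bounded
  obtain ⟨n, hjn, hn⟩ := exists_ge_ge j (max d d')
  induction hjn using Nat.decreasingInduction with
  | self =>
    rw [h_top _ (by omega), h_top' _ (by omega), h_bot _ (by omega), h_bot' _ (by omega)]
    exact ⟨rfl, rfl⟩
  | of_succ j _ ih =>
    obtain ⟨ih_pos, ih_neg⟩ := ih
    rw [neg_add'] at ih_neg
    have h_comap := h.eq_comap_pow (j + 1)
    have h_map := h.eq_map_pow (j + 1)
    rw [ih_neg, ← h'.eq_comap_pow] at h_comap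
    rw [ih_pos, ← h'.eq_map_pow] at h_map
    exact ⟨by simpa using h_comap, by simpa using h_map⟩

theorem unique (h : IsWeightFiltration N W) (h' : IsWeightFiltration N W') : W = W' := by
  funext k
  cases k with
  | ofNat j => exact (h.eq_natCast_and_eq_neg_succ h' j).1
  | negSucc j => exact (h.eq_natCast_and_eq_neg_succ h' j).2

end IsWeightFiltration

/-- The weight filtration of `N`, as an explicit sum of images of kernels. A negative exponent
`2 * a + k + 1` is truncated to `0`, and then contributes `ker 1 = ⊥`. -/
def weightFiltration (N : Module.End R M) (k : ℤ) : Submodule R M :=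
  ⨆ a : ℕ, (LinearMap.ker (N ^ (2 * a + k + 1).toNat)).map (N ^ a)

variable (N : Module.End R M)

theorem weightFiltration_mono : Monotone (weightFiltration N) := fun _ _ hkl =>
  iSup_mono fun a => Submodule.map_mono <| N.iterateKer.monotone (by omega)

theorem map_pow_ker_le_weightFiltration {a m : ℕ} {k : ℤ} (hm : m = (2 * a + k + 1).toNat) :
    (LinearMap.ker (N ^ m)).map (N ^ a) ≤ weightFiltration N k :=
  hm ▸ le_iSup (fun a : ℕ => (LinearMap.ker (N ^ (2 * a + k + 1).toNat)).map (N ^ a)) a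

theorem ker_pow_le_weightFiltration (j : ℕ) :
    LinearMap.ker (N ^ j) ≤ weightFiltration N (j - 1) := by
  simpa [Module.End.one_eq_id] using
    map_pow_ker_le_weightFiltration N (a := 0) (m := j) (k := j - 1) (by simp)

theorem map_weightFiltration_le (k : ℤ) :
    (weightFiltration N k).map N ≤ weightFiltration N (k - 2) := by
  rw [weightFiltration, Submodule.map_iSup]
  refine iSup_le fun a => ?_
  rw [← Submodule.map_comp, ← Module.End.mul_eq_comp, ← pow_succ']
  exact map_pow_ker_le_weightFiltration N (by push_cast; ring_nf)

theorem weightFiltration_le_map_pow {j : ℕ} {l : ℤ} (hl : l ≤ -j) :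
    weightFiltration N l ≤ (weightFiltration N (l + 2 * j)).map (N ^ j) := by
  refine iSup_le fun a => ?_
  rcases le_or_gt j a with hja | haj
  · obtain ⟨b, rfl⟩ := Nat.exists_eq_add_of_le hja
    rw [pow_add, Module.End.mul_eq_comp, Submodule.map_comp]
    exact Submodule.map_mono (map_pow_ker_le_weightFiltration N (by push_cast; ring_nf))
  · rintro _ ⟨y, hy, rfl⟩
    have hNy : (N ^ a) y = 0 := N.iterateKer.monotone (by omega : (2 * a + l + 1).toNat ≤ a) hy
    rw [hNy]
    exact zero_mem _

variable {N}

theorem weightFiltration_eq_bot {n : ℕ} (hn : N ^ n = 0) {k : ℤ} (hk : k ≤ -n) :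
    weightFiltration N k = ⊥ := by
  simpa [hn] using weightFiltration_le_map_pow N hk

theorem weightFiltration_eq_top {n : ℕ} (hn : N ^ n = 0) {k : ℤ} (hk : n - 1 ≤ k) :
    weightFiltration N k = ⊤ := by
  refine top_le_iff.1 (le_trans ?_ (weightFiltration_mono N hk))
  simpa [hn] using ker_pow_le_weightFiltration N n

theorem isWeightFiltration_weightFiltration (hN : IsNilpotent N) :
    IsWeightFiltration N (weightFiltration N) where
  monotone := weightFiltration_mono N
  bounded := by
    obtain ⟨n, hn⟩ := hN
    exact ⟨n, fun j hj => weightFiltration_eq_bot hn hj.le,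
      fun j hj => weightFiltration_eq_top hn (by omega)⟩
  map_le := map_weightFiltration_le N
  mem_of_pow_apply_mem j v _ hNv := by
    obtain ⟨u, hu, huv⟩ := weightFiltration_le_map_pow N (j := j) (by omega) hNv
    have hu' : u ∈ weightFiltration N (j - 1) := by
      rwa [show (j : ℤ) - 1 = -j - 1 + 2 * j by ring]
    have hvu : v - u ∈ weightFiltration N (j - 1) :=
      ker_pow_le_weightFiltration N j (by rw [LinearMap.mem_ker, map_sub, huv, sub_self])
    simpa using add_mem hvu hu'
  exists_pow_apply_sub_mem j v hv := by
    obtain ⟨u, hu, rfl⟩ := weightFiltration_le_map_pow N le_rfl hv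
    have hu' : u ∈ weightFiltration N j := by
      rwa [show (j : ℤ) = -j + 2 * j by ring]
    exact ⟨u, hu', by simp⟩

theorem monodromy_weight_filtration_existsUnique_general (hN : IsNilpotent N) :
    ∃! W : ℤ → Submodule R M, IsWeightFiltration N W :=
  ⟨weightFiltration N, isWeightFiltration_weightFiltration hN,
    fun _ hW => hW.unique (isWeightFiltration_weightFiltration hN)⟩

end

theorem isMonodromyWeightFiltration_iff_isWeightFiltration {N : Module.End ℂ V}
    {W : ℤ → Submodule ℂ V} :
    IsMonodromyWeightFiltration N W ↔ IsWeightFiltration N W :=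
  ⟨fun ⟨h_mono, h_bdd, h_map, h_inj, h_surj⟩ => ⟨h_mono, h_bdd, h_map, h_inj, h_surj⟩,
    fun ⟨h_mono, h_bdd, h_map, h_inj, h_surj⟩ => ⟨h_mono, h_bdd, h_map, h_inj, h_surj⟩⟩

/-- Existence and uniqueness of the monodromy weight filtration. -/
theorem monodromy_weight_filtration_existsUnique
    [FiniteDimensional ℂ V] (N : Module.End ℂ V)
    (hnil : IsNilpotent N) (hne : N ≠ 0) :
    ∃! W : ℤ → Submodule ℂ V, IsMonodromyWeightFiltration N W := by
  simpa only [isMonodromyWeightFiltration_iff_isWeightFiltration] using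
    monodromy_weight_filtration_existsUnique_general hnil
end

section
/- Let N be a nonzero nilpotent endomorphism of a finite-dimensional complex vector space V. There is a bijection between the set of gradings H of the monodromy weight filtration W(N) satisfying [H, N] = -2N and the set of Lie algebra representations ρ : sl₂(ℂ) → End(V) with ρ(n₋) = N. -/
variable {V : Type*} [AddCommGroup V] [Module ℂ V]

/-- A grading of an increasing filtration `W`: a semisimple endomorphism whose
`k`-eigenspace splits `W k` over `W (k-1)`. -/
def IsGrading (Y : Module.End ℂ V) (W : ℤ → Submodule ℂ V) : Prop :=
  ∀ k : ℤ, W k = Module.End.eigenspace Y (k : ℂ) ⊔ W (k - 1) ∧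
    Module.End.eigenspace Y (k : ℂ) ⊓ W (k - 1) = ⊥

/-!
Both directions rest on one feature of `W = W(N)`: it is the smallest family of subspaces `M` with
`ker N ^ (j + 1) ≤ M j` for `j : ℕ` and `N (M k) ≤ M (k - 2)` for `k : ℤ`.

Given a representation, put `H = ρ(y)` and `P = ρ(n₊)`. Applying this to
`M k = {x | H x - k x ∈ W (k - 1)}`, with the commutator of `P` and `N ^ (j + 1)` as input, shows
that `H` acts on `W k / W (k - 1)` as `k`, and such an `H` grades `W`. Applying it to
`M k = {x | D x ∈ W k}` shows that an operator `D` commuting with `N` preserves `W`; the difference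
of two candidates for `P` is such a `D` that also raises weights by `2`, so it vanishes.

Conversely, given `H`, the map `N ^ k` identifies the eigenspaces of weight `k` and `-k`. Let `B k`
be the inverse, extended by zero. Then `[B k, N ^ k]` is the projection to weight `k` minus the
projection to weight `-k`, so `H = ∑ k, k [B k, N ^ k]`, and `[B k, N ^ k]` is itself a
commutator with `N` because `ad N` telescopes `∑ i < k, N ^ i * B k * N ^ (k - 1 - i)`. This
exhibits `H` as `[P, N]`.
-/

open Module.End

section Commutators

attribute [local instance] LieRing.ofAssociativeRing

variable {R A : Type*} [CommRing R] [Ring A] [Algebra R A]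

theorem lie_mul_eq_lie_mul_add_mul_lie (x y z : A) : ⁅x, y * z⁆ = ⁅x, y⁆ * z + y * ⁅x, z⁆ := by
  simp only [Ring.lie_def]
  noncomm_ring

theorem lie_mul_eq_smul {h x y : A} {a b : R} (hx : ⁅h, x⁆ = a • x) (hy : ⁅h, y⁆ = b • y) :
    ⁅h, x * y⁆ = (a + b) • (x * y) := by
  rw [lie_mul_eq_lie_mul_add_mul_lie, hx, hy, smul_mul_assoc, mul_smul_comm, add_smul]

theorem lie_pow_eq_smul {h x : A} {a : R} (hx : ⁅h, x⁆ = a • x) (m : ℕ) :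
    ⁅h, x ^ m⁆ = (m * a) • x ^ m := by
  induction m with
  | zero => simp [Ring.lie_def]
  | succ m ih =>
    rw [pow_succ, lie_mul_eq_smul ih hx]
    push_cast
    ring_nf

theorem lie_pow_succ_of_lie_eq {h e f : A} (hf : ⁅h, f⁆ = (-2 : R) • f) (he : ⁅e, f⁆ = h) (m : ℕ) :
    ⁅e, f ^ (m + 1)⁆ = (m + 1 : R) • (f ^ m * (h - (m : R) • 1)) := by
  induction m with
  | zero => simp [he]
  | succ m ih =>
    have hpow : h * f ^ (m + 1) = f ^ (m + 1) * h + ((m + 1 : ℕ) * (-2) : R) • f ^ (m + 1) := by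
      rw [← lie_pow_eq_smul hf, Ring.lie_def]
      abel
    rw [pow_succ' f (m + 1), lie_mul_eq_lie_mul_add_mul_lie, he, ih, hpow, mul_smul_comm,
      ← mul_assoc, ← pow_succ']
    simp only [mul_sub, mul_smul_comm, mul_one]
    push_cast
    module

theorem lie_sum_pow_mul_mul_pow (x b : A) (k : ℕ) :
    ⁅∑ i ∈ Finset.range k, x ^ i * b * x ^ (k - 1 - i), x⁆ = ⁅b, x ^ k⁆ := by
  have telescope := Finset.sum_range_sub' (fun i => x ^ i * b * x ^ (k - i)) k
  simp only [pow_zero, one_mul, Nat.sub_zero, Nat.sub_self, mul_one] at telescope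
  rw [Ring.lie_def, Ring.lie_def, ← telescope, Finset.sum_mul, Finset.mul_sum,
    ← Finset.sum_sub_distrib]
  refine Finset.sum_congr rfl fun i hi => ?_
  rw [Finset.mem_range] at hi
  rw [show k - i = (k - 1 - i) + 1 by lia, show k - (i + 1) = k - 1 - i by lia, pow_succ,
    pow_succ' x i]
  simp only [mul_assoc]

theorem lie_sum_pow_mul_mul_pow_eq_smul {h x b : A} {a c : R} (hx : ⁅h, x⁆ = a • x)
    (hb : ⁅h, b⁆ = c • b) (k : ℕ) :
    ⁅h, ∑ i ∈ Finset.range k, x ^ i * b * x ^ (k - 1 - i)⁆ =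
      ((k - 1) * a + c) • ∑ i ∈ Finset.range k, x ^ i * b * x ^ (k - 1 - i) := by
  rw [lie_sum, Finset.smul_sum]
  refine Finset.sum_congr rfl fun i hi => ?_
  rw [Finset.mem_range] at hi
  rw [lie_mul_eq_smul (lie_mul_eq_smul (lie_pow_eq_smul hx i) hb) (lie_pow_eq_smul hx _),
    Nat.cast_sub (by lia), Nat.cast_sub (by lia)]
  push_cast
  ring_nf

end Commutators

theorem apply_mem_eigenspace_of_lie_eq_smul {R M : Type*} [CommRing R] [AddCommGroup M]
    [Module R M] {H T : Module.End R M} {a μ ν : R} (hT : ⁅H, T⁆ = a • T) (hν : ν = μ + a)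
    {v : M} (hv : v ∈ eigenspace H μ) : T v ∈ eigenspace H ν := by
  rw [mem_eigenspace_iff] at hv ⊢
  have hTv := LinearMap.congr_fun hT v
  simp only [Ring.lie_def, LinearMap.sub_apply, mul_apply, LinearMap.smul_apply, hv,
    map_smul] at hTv
  rw [sub_eq_iff_eq_add.1 hTv, hν]
  module

theorem map_pow_le_of_map_le {R M : Type*} [Semiring R] [AddCommMonoid M] [Module R M]
    {N : Module.End R M} {F : ℤ → Submodule R M} (hF : ∀ k, (F k).map N ≤ F (k - 2))
    (m : ℕ) (k : ℤ) : (F k).map (N ^ m) ≤ F (k - 2 * m) := by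
  induction m with
  | zero => simp [one_eq_id]
  | succ m ih =>
    rw [pow_succ', mul_eq_comp, Submodule.map_comp]
    refine (Submodule.map_mono ih).trans ((hF _).trans_eq ?_)
    congr 1
    push_cast
    ring

theorem exists_leftInverse_on_vanishing_on {R M M₂ : Type*} [Ring R] [AddCommGroup M]
    [AddCommGroup M₂] [Module R M] [Module R M₂] {f : M →ₗ[R] M₂} {E : Submodule R M}
    {C : Submodule R M₂} (hE : Disjoint E (LinearMap.ker f)) (hC : IsCompl (E.map f) C) :
    ∃ B : M₂ →ₗ[R] M, (∀ v ∈ E, B (f v) = v) ∧ ∀ v ∈ C, B v = 0 := by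
  have hinj : Function.Injective (f.domRestrict E) := by
    rwa [← LinearMap.ker_eq_bot, LinearMap.ker_domRestrict, ← Submodule.disjoint_iff_comap_eq_bot]
  rw [← LinearMap.range_domRestrict] at hC
  let e := LinearEquiv.ofInjective (f.domRestrict E) hinj
  refine ⟨LinearMap.ofIsCompl hC (E.subtype ∘ₗ e.symm) 0, fun v hv => ?_, fun v hv => ?_⟩
  · have hfv : f v = e ⟨v, hv⟩ := rfl
    simp [hfv]
  · exact LinearMap.ofIsCompl_apply_right hC ⟨v, hv⟩

section Gradings

/-- `H` acts on each graded piece `W k / W (k - 1)` as multiplication by `k`, expressed on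
representatives in `W k`. For finite filtrations this is a criterion for `H` to be a grading. -/
def ActsByWeight (H : Module.End ℂ V) (W : ℤ → Submodule ℂ V) : Prop :=
  ∀ k : ℤ, ∀ x ∈ W k, H x - (k : ℂ) • x ∈ W (k - 1)

variable {H : Module.End ℂ V} {W : ℤ → Submodule ℂ V} {a b : ℤ}

namespace ActsByWeight

theorem mem_sub_one (h : ActsByWeight H W) {k l : ℤ} (hkl : k ≠ l) {x : V}
    (hx : x ∈ eigenspace H (k : ℂ)) (hxl : x ∈ W l) : x ∈ W (l - 1) := by
  have hshift := h l x hxl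
  rw [mem_eigenspace_iff.1 hx, ← sub_smul] at hshift
  exact (Submodule.smul_mem_iff _ (sub_ne_zero.2 (Int.cast_injective.ne hkl))).1 hshift

theorem disjoint_eigenspace (h : ActsByWeight H W) (hbot : ∀ k < a, W k = ⊥) {k l : ℤ}
    (hlk : l < k) : Disjoint (eigenspace H (k : ℂ)) (W l) := by
  induction l using Int.strongRec (m := a) with
  | lt l hl => simp [hbot l hl]
  | ge l _ ih =>
    rw [Submodule.disjoint_def]
    intro x hx hxl
    exact Submodule.disjoint_def.1 (ih (l - 1) (by lia) (by lia)) x hx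
      (h.mem_sub_one hlk.ne' hx hxl)

theorem eigenspace_le (h : ActsByWeight H W) (hmono : Monotone W) (htop : W b = ⊤) (k : ℤ) :
    eigenspace H (k : ℂ) ≤ W k := by
  have descend : ∀ l, k ≤ l → ∀ x ∈ eigenspace H (k : ℂ), x ∈ W l → x ∈ W k := by
    intro l hl x hx
    induction l, hl using Int.leInduction with
    | base => exact id
    | succ l hl ih =>
      intro hxl
      exact ih (by simpa using h.mem_sub_one (by lia) hx hxl)
  exact fun x hx => descend (max k b) (le_max_left k b) x hx
    (hmono (le_max_right k b) (htop ▸ Submodule.mem_top))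

theorem exists_sub_smul_eq (h : ActsByWeight H W) (hmono : Monotone W)
    (hbot : ∀ k < a, W k = ⊥) {k l : ℤ} (hlk : l < k) {x : V} (hx : x ∈ W l) :
    ∃ w ∈ W l, H w - (k : ℂ) • w = x := by
  induction l using Int.strongRec (m := a) generalizing x with
  | lt l hl =>
    rw [hbot l hl, Submodule.mem_bot] at hx
    exact ⟨0, zero_mem _, by simp [hx]⟩
  | ge l _ ih =>
    have hne : (l - k : ℂ) ≠ 0 := sub_ne_zero.2 (Int.cast_injective.ne hlk.ne)
    -- Modulo `W (l - 1)`, the operator `H - k` is multiplication by `l - k`.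
    let w₀ := (l - k : ℂ)⁻¹ • x
    have hw₀ : w₀ ∈ W l := Submodule.smul_mem _ _ hx
    have hx_eq : x = (l - k : ℂ) • w₀ := (smul_inv_smul₀ hne x).symm
    obtain ⟨w₁, hw₁, hw₁_eq⟩ := ih (l - 1) (by lia) (by lia) (h l w₀ hw₀)
    refine ⟨w₀ - w₁, sub_mem hw₀ (hmono (by lia) hw₁), ?_⟩
    rw [hx_eq, map_sub, smul_sub, sub_sub_sub_comm, hw₁_eq]
    module

theorem isGrading (h : ActsByWeight H W) (hmono : Monotone W) (hbot : ∀ k < a, W k = ⊥)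
    (htop : W b = ⊤) : IsGrading H W := by
  refine fun k => ⟨le_antisymm (fun v hv => ?_) ?_, ?_⟩
  · obtain ⟨w, hw, hw_eq⟩ := h.exists_sub_smul_eq hmono hbot (sub_one_lt k) (h k v hv)
    have heigen : v - w ∈ eigenspace H (k : ℂ) := by
      rw [mem_eigenspace_iff, map_sub, smul_sub, sub_eq_sub_iff_sub_eq_sub, hw_eq]
    exact Submodule.mem_sup.2 ⟨v - w, heigen, w, hw, sub_add_cancel v w⟩
  · exact sup_le (h.eigenspace_le hmono htop k) (hmono (by lia))
  · exact (h.disjoint_eigenspace hbot (by lia)).eq_bot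

end ActsByWeight

namespace IsGrading

theorem eigenspace_le (hG : IsGrading H W) (k : ℤ) : eigenspace H (k : ℂ) ≤ W k :=
  le_sup_left.trans_eq (hG k).1.symm

theorem disjoint_eigenspace (hG : IsGrading H W) (k : ℤ) :
    Disjoint (eigenspace H (k : ℂ)) (W (k - 1)) :=
  disjoint_iff.2 (hG k).2

theorem le_iSup_eigenspace (hG : IsGrading H W) (hbot : ∀ k < a, W k = ⊥) (l : ℤ) :
    W l ≤ ⨆ k : ℤ, eigenspace H (k : ℂ) := by
  induction l using Int.strongRec (m := a) with
  | lt l hl => simp [hbot l hl]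
  | ge l _ ih =>
    rw [(hG l).1]
    exact sup_le (le_iSup (fun k : ℤ => eigenspace H (k : ℂ)) l) (ih (l - 1) (by lia))

theorem iSup_eigenspace_eq_top (hG : IsGrading H W) (hbot : ∀ k < a, W k = ⊥) (htop : W b = ⊤) :
    ⨆ k : ℤ, eigenspace H (k : ℂ) = ⊤ :=
  top_le_iff.1 (htop ▸ hG.le_iSup_eigenspace hbot b)

theorem endomorphism_ext (hG : IsGrading H W) (hbot : ∀ k < a, W k = ⊥) (htop : W b = ⊤)
    {S T : Module.End ℂ V} (hST : ∀ k : ℤ, ∀ v ∈ eigenspace H (k : ℂ), S v = T v) : S = T := by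
  rw [← LinearMap.eqLocus_eq_top, ← top_le_iff, ← hG.iSup_eigenspace_eq_top hbot htop]
  exact iSup_le hST

theorem isCompl_eigenspace (hG : IsGrading H W) (hbot : ∀ k < a, W k = ⊥) (htop : W b = ⊤)
    (k : ℤ) : IsCompl (eigenspace H (k : ℂ)) (⨆ (j : ℤ) (_ : j ≠ k), eigenspace H (j : ℂ)) where
  disjoint := (eigenspaces_iSupIndep H).comp Int.cast_injective k
  codisjoint := by
    rw [codisjoint_iff, ← iSup_split_single (fun j : ℤ => eigenspace H (j : ℂ)) k,
      hG.iSup_eigenspace_eq_top hbot htop]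

theorem eigenspace_eq_bot_of_eq_bot (hG : IsGrading H W) {k : ℤ} (hk : W k = ⊥) :
    eigenspace H (k : ℂ) = ⊥ :=
  le_bot_iff.1 (hk ▸ hG.eigenspace_le k)

theorem eigenspace_eq_bot_of_sub_one_eq_top (hG : IsGrading H W) {k : ℤ} (hk : W (k - 1) = ⊤) :
    eigenspace H (k : ℂ) = ⊥ :=
  disjoint_top.1 (hk ▸ hG.disjoint_eigenspace k)

end IsGrading

end Gradings

theorem sum_range_smul_ite_sub_ite {R M : Type*} [Ring R] [AddCommGroup M] [Module R M] {d : ℕ}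
    {j : ℤ} (hj : j.natAbs ≤ d) (v : M) :
    ∑ k ∈ Finset.range (d + 1), (k : R) • ((if j = k then v else 0) - (if j = -k then v else 0)) =
      (j : R) • v := by
  rw [Finset.sum_eq_single_of_mem j.natAbs (Finset.mem_range_succ_iff.2 hj)
    fun k _ hk => by rw [if_neg (by lia), if_neg (by lia), sub_zero, smul_zero]]
  obtain ⟨m, rfl | rfl⟩ := j.eq_nat_or_neg
  · rcases eq_or_ne m 0 with rfl | hm
    · simp
    · rw [if_pos (by lia), if_neg (by lia)]
      simp
  · rcases eq_or_ne m 0 with rfl | hm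
    · simp
    · rw [if_neg (by lia), if_pos (by lia)]
      simp

namespace IsMonodromyWeightFiltration

attribute [local instance] LieRing.ofAssociativeRing

variable {N H P : Module.End ℂ V} {W : ℤ → Submodule ℂ V}

theorem ker_pow_le (hW : IsMonodromyWeightFiltration N W) (j : ℕ) :
    LinearMap.ker (N ^ j) ≤ W (j - 1) := by
  obtain ⟨-, ⟨d, -, htop⟩, -, hinj, -⟩ := hW
  induction j using Nat.strong_decreasing_induction with
  | base => exact ⟨d, fun m hm => by simp [htop (m - 1) (by lia)]⟩
  | step j ih =>
    intro v hv
    have hv_succ : v ∈ LinearMap.ker (N ^ (j + 1)) := by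
      rw [LinearMap.mem_ker] at hv ⊢
      rw [pow_succ', mul_apply, hv, map_zero]
    have hvj : v ∈ W j := by simpa using ih (j + 1) (by lia) hv_succ
    exact hinj j v hvj (by rw [LinearMap.mem_ker.1 hv]; exact zero_mem _)

theorem map_pow_le (hW : IsMonodromyWeightFiltration N W) {m : ℕ} {k l : ℤ}
    (hl : l = k - 2 * m) : (W k).map (N ^ m) ≤ W l :=
  hl ▸ map_pow_le_of_map_le hW.2.2.1 m k

theorem le_map_pow (hW : IsMonodromyWeightFiltration N W) (m : ℕ) :
    W (-m) ≤ (W m).map (N ^ m) := by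
  obtain ⟨hmono, ⟨d, hbot, -⟩, hmap, -, hsurj⟩ := hW
  induction m using Nat.strong_decreasing_induction with
  | base => exact ⟨d, fun m hm => by simp [hbot (-m) (by lia)]⟩
  | step m ih =>
    intro v hv
    obtain ⟨u, hu, huv⟩ := hsurj m v hv
    obtain ⟨w, hw, hw_eq⟩ := ih (m + 1) (by lia) (by convert huv using 2; push_cast; ring)
    have hNw : N w ∈ W m :=
      hmono (by lia) (hmap _ (Submodule.mem_map_of_mem hw))
    refine ⟨u - N w, sub_mem hu hNw, ?_⟩
    rw [map_sub, ← mul_apply, ← pow_succ, hw_eq, sub_sub_cancel]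

theorem le_ker_pow_sup_map (hW : IsMonodromyWeightFiltration N W) (k : ℕ) :
    W k ≤ LinearMap.ker (N ^ (k + 1)) ⊔ (W (k + 2)).map N := by
  intro x hx
  have hNx : (N ^ (k + 1)) x ∈ W (-(k + 2 : ℕ)) :=
    hW.map_pow_le (by push_cast; ring) (Submodule.mem_map_of_mem hx)
  obtain ⟨y, hy, hy_eq⟩ := hW.le_map_pow (k + 2) hNx
  refine Submodule.mem_sup.2 ⟨x - N y, ?_, N y, Submodule.mem_map_of_mem (by simpa using hy),
    sub_add_cancel x (N y)⟩
  rw [LinearMap.mem_ker, map_sub, ← hy_eq, ← mul_apply (N ^ (k + 1)), ← pow_succ, sub_self]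

theorem le_of_ker_pow_le_of_map_le (hW : IsMonodromyWeightFiltration N W)
    {M : ℤ → Submodule ℂ V} (hker : ∀ j : ℕ, LinearMap.ker (N ^ (j + 1)) ≤ M j)
    (hmap : ∀ k, (M k).map N ≤ M (k - 2)) (k : ℤ) : W k ≤ M k := by
  obtain ⟨d, hbot, -⟩ := hW.2.1
  have nonneg (m : ℕ) : W m ≤ M m := by
    induction m using Nat.strong_decreasing_induction with
    | base =>
      refine ⟨d, fun m hm x hx => hker m ?_⟩
      have hNx := hW.map_pow_le (m := m + 1) rfl (Submodule.mem_map_of_mem hx)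
      rwa [hbot _ (by lia), Submodule.mem_bot] at hNx
    | step m ih =>
      refine (hW.le_ker_pow_sup_map m).trans (sup_le (hker m) ?_)
      simpa using (Submodule.map_mono (ih (m + 2) (by lia))).trans (hmap _)
  obtain ⟨m, rfl | rfl⟩ := k.eq_nat_or_neg
  · exact nonneg m
  · refine (hW.le_map_pow m).trans ((Submodule.map_mono (nonneg m)).trans ?_)
    refine (map_pow_le_of_map_le hmap m m).trans_eq ?_
    congr 1
    ring

theorem sub_smul_mem_of_mem_ker_pow (hW : IsMonodromyWeightFiltration N W)
    (hHN : ⁅H, N⁆ = (-2 : ℂ) • N) (hPN : ⁅P, N⁆ = H) {j : ℕ} {x : V}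
    (hx : x ∈ LinearMap.ker (N ^ (j + 1))) : H x - (j : ℂ) • x ∈ W (j - 1) := by
  rw [LinearMap.mem_ker] at hx
  have hPx : -(N ^ (j + 1)) (P x) = (j + 1 : ℂ) • (N ^ j) (H x - (j : ℂ) • x) := by
    simpa [Ring.lie_def, hx] using LinearMap.congr_fun (lie_pow_succ_of_lie_eq hHN hPN j) x
  have hHx : (N ^ (j + 1)) (H x) = 0 := by
    simpa [Ring.lie_def, hx] using LinearMap.congr_fun (lie_pow_eq_smul hHN (j + 1)) x
  have hPx_mem : P x ∈ W (j + 1) := by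
    have hker : P x ∈ LinearMap.ker (N ^ (j + 2)) := by
      rw [LinearMap.mem_ker, pow_succ', mul_apply, ← neg_eq_zero, ← map_neg, hPx, map_smul,
        ← mul_apply, ← pow_succ', map_sub, map_smul, hHx, hx]
      simp
    convert hW.ker_pow_le (j + 2) hker using 2
    push_cast
    ring
  have hmem : H x - (j : ℂ) • x ∈ W j := by
    have hker : H x - (j : ℂ) • x ∈ LinearMap.ker (N ^ (j + 1)) := by simp [hHx, hx]
    simpa using hW.ker_pow_le (j + 1) hker
  have hj : (j + 1 : ℂ) ≠ 0 := Nat.cast_add_one_ne_zero j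
  refine hW.2.2.2.1 j _ hmem ((Submodule.smul_mem_iff _ hj).1 ?_)
  rw [← hPx]
  exact neg_mem (hW.map_pow_le (by push_cast; ring) (Submodule.mem_map_of_mem hPx_mem))

theorem actsByWeight_of_lie_eq (hW : IsMonodromyWeightFiltration N W)
    (hHN : ⁅H, N⁆ = (-2 : ℂ) • N) (hPN : ⁅P, N⁆ = H) : ActsByWeight H W := by
  let M (k : ℤ) : Submodule ℂ V := (W (k - 1)).comap (H - (k : ℂ) • 1)
  have hmap (k : ℤ) : (M k).map N ≤ M (k - 2) := by
    rw [Submodule.map_le_iff_le_comap]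
    intro x hx
    have hcomm : H (N x) - ((k - 2 : ℤ) : ℂ) • N x = N (H x - (k : ℂ) • x) := by
      have hHNx := LinearMap.congr_fun hHN x
      simp only [Ring.lie_def, LinearMap.sub_apply, mul_apply, LinearMap.smul_apply] at hHNx
      rw [sub_eq_iff_eq_add.1 hHNx, map_sub, map_smul]
      push_cast
      module
    have hNx : N (H x - (k : ℂ) • x) ∈ W (k - 1 - 2) :=
      hW.2.2.1 _ (Submodule.mem_map_of_mem (by simpa [M] using hx))
    rw [← hcomm, sub_right_comm] at hNx
    simpa [M] using hNx
  have hker (j : ℕ) : LinearMap.ker (N ^ (j + 1)) ≤ M j := fun x hx => by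
    simpa [M] using hW.sub_smul_mem_of_mem_ker_pow hHN hPN hx
  intro k x hx
  simpa [M] using hW.le_of_ker_pow_le_of_map_le hker hmap k hx

theorem isGrading_of_lie_eq (hW : IsMonodromyWeightFiltration N W)
    (hHN : ⁅H, N⁆ = (-2 : ℂ) • N) (hPN : ⁅P, N⁆ = H) : IsGrading H W := by
  obtain ⟨d, hbot, htop⟩ := hW.2.1
  exact (hW.actsByWeight_of_lie_eq hHN hPN).isGrading hW.1 hbot (htop d le_rfl)

theorem map_le_of_commute (hW : IsMonodromyWeightFiltration N W) {D : Module.End ℂ V}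
    (hDN : Commute D N) (k : ℤ) : (W k).map D ≤ W k := by
  rw [Submodule.map_le_iff_le_comap]
  refine hW.le_of_ker_pow_le_of_map_le (M := fun k => (W k).comap D) (fun j x hx => ?_)
    (fun k => ?_) k
  · have hDx : (N ^ (j + 1)) (D x) = 0 := by
      rw [← mul_apply, ← (hDN.pow_right (j + 1)).eq, mul_apply, LinearMap.mem_ker.1 hx, map_zero]
    simpa using hW.ker_pow_le (j + 1) hDx
  · rw [Submodule.map_le_iff_le_comap]
    intro x hx
    rw [Submodule.mem_comap, Submodule.mem_comap, ← mul_apply, hDN.eq, mul_apply]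
    exact hW.2.2.1 k (Submodule.mem_map_of_mem hx)

theorem eq_zero_of_commute_of_lie_eq_smul (hW : IsMonodromyWeightFiltration N W)
    (hG : IsGrading H W) {D : Module.End ℂ V} (hDN : Commute D N) (hHD : ⁅H, D⁆ = (2 : ℂ) • D) :
    D = 0 := by
  obtain ⟨d, hbot, htop⟩ := hW.2.1
  refine hG.endomorphism_ext hbot (htop d le_rfl) fun k v hv => ?_
  have hDv : D v ∈ eigenspace H ((k + 2 : ℤ) : ℂ) :=
    apply_mem_eigenspace_of_lie_eq_smul hHD (by push_cast; rfl) hv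
  have hDv_mem : D v ∈ W k :=
    hW.map_le_of_commute hDN k (Submodule.mem_map_of_mem (hG.eigenspace_le k hv))
  exact Submodule.disjoint_def.1 (hG.disjoint_eigenspace (k + 2)) _ hDv (hW.1 (by lia) hDv_mem)

theorem raising_unique (hW : IsMonodromyWeightFiltration N W) (hG : IsGrading H W)
    {P' : Module.End ℂ V} (hHP : ⁅H, P⁆ = (2 : ℂ) • P) (hHP' : ⁅H, P'⁆ = (2 : ℂ) • P')
    (hPP' : ⁅P, N⁆ = ⁅P', N⁆) : P = P' :=
  sub_eq_zero.1 <| hW.eq_zero_of_commute_of_lie_eq_smul hG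
    (commute_iff_lie_eq.2 (by rw [sub_lie, hPP', sub_self]))
    (by rw [lie_sub, hHP, hHP', smul_sub])

theorem disjoint_eigenspace_ker_pow (hW : IsMonodromyWeightFiltration N W) (hG : IsGrading H W)
    (k : ℕ) : Disjoint (eigenspace H (k : ℂ)) (LinearMap.ker (N ^ k)) := by
  simpa using (hG.disjoint_eigenspace k).mono_right (hW.ker_pow_le k)

theorem map_pow_eigenspace (hW : IsMonodromyWeightFiltration N W) (hG : IsGrading H W)
    (hHN : ⁅H, N⁆ = (-2 : ℂ) • N) (k : ℕ) :
    (eigenspace H (k : ℂ)).map (N ^ k) = eigenspace H ((-k : ℤ) : ℂ) := by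
  have hmem : ∀ v ∈ eigenspace H (k : ℂ), (N ^ k) v ∈ eigenspace H ((-k : ℤ) : ℂ) := fun v hv =>
    apply_mem_eigenspace_of_lie_eq_smul (lie_pow_eq_smul hHN k) (by push_cast; ring) hv
  refine le_antisymm (Submodule.map_le_iff_le_comap.2 hmem) fun v hv => ?_
  obtain ⟨u, hu, rfl⟩ := hW.le_map_pow k (hG.eigenspace_le _ hv)
  rw [(hG k).1] at hu
  obtain ⟨e, he, w, hw, rfl⟩ := Submodule.mem_sup.1 hu
  rw [Int.cast_natCast] at he
  have hNw_mem : (N ^ k) w ∈ W (-k - 1) :=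
    hW.map_pow_le (by ring) (Submodule.mem_map_of_mem hw)
  have hNw_eigen : (N ^ k) w ∈ eigenspace H ((-k : ℤ) : ℂ) := by
    simpa using sub_mem hv (hmem e he)
  have hNw : (N ^ k) w = 0 :=
    Submodule.disjoint_def.1 (hG.disjoint_eigenspace (-k)) _ hNw_eigen hNw_mem
  exact ⟨e, he, by rw [map_add, hNw, add_zero]⟩

theorem exists_inverse_pow (hW : IsMonodromyWeightFiltration N W) (hG : IsGrading H W)
    (hHN : ⁅H, N⁆ = (-2 : ℂ) • N) (k : ℕ) :
    ∃ B : Module.End ℂ V, (∀ v ∈ eigenspace H (k : ℂ), B ((N ^ k) v) = v) ∧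
      ∀ j : ℤ, j ≠ -k → ∀ v ∈ eigenspace H (j : ℂ), B v = 0 := by
  obtain ⟨d, hbot, htop⟩ := hW.2.1
  have hcompl := hG.isCompl_eigenspace hbot (htop d le_rfl) (-k)
  rw [← hW.map_pow_eigenspace hG hHN] at hcompl
  obtain ⟨B, hB, hB_zero⟩ :=
    exists_leftInverse_on_vanishing_on (hW.disjoint_eigenspace_ker_pow hG k) hcompl
  exact ⟨B, hB, fun j hj v hv => hB_zero v
    (le_iSup₂ (f := fun (j : ℤ) (_ : j ≠ -k) => eigenspace H (j : ℂ)) j hj hv)⟩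

theorem exists_lie_pow_apply_eq (hW : IsMonodromyWeightFiltration N W) (hG : IsGrading H W)
    (hHN : ⁅H, N⁆ = (-2 : ℂ) • N) (k : ℕ) :
    ∃ B : Module.End ℂ V, ⁅H, B⁆ = (2 * k : ℂ) • B ∧
      ∀ j : ℤ, ∀ v ∈ eigenspace H (j : ℂ),
        ⁅B, N ^ k⁆ v = (if j = k then v else 0) - (if j = -k then v else 0) := by
  obtain ⟨B, hBN, hB_zero⟩ := hW.exists_inverse_pow hG hHN k
  obtain ⟨d, hbot, htop⟩ := hW.2.1
  have hsurj : ∀ v ∈ eigenspace H ((-k : ℤ) : ℂ), ∃ u ∈ eigenspace H (k : ℂ), (N ^ k) u = v :=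
    fun v hv => by rwa [← hW.map_pow_eigenspace hG hHN] at hv
  refine ⟨B, hG.endomorphism_ext hbot (htop d le_rfl) fun j v hv => ?_, fun j v hv => ?_⟩
  · have hHv := mem_eigenspace_iff.1 hv
    simp only [Ring.lie_def, LinearMap.sub_apply, mul_apply, LinearMap.smul_apply, hHv, map_smul]
    by_cases hj : j = -k
    · subst hj
      obtain ⟨u, hu, rfl⟩ := hsurj v hv
      rw [hBN u hu, mem_eigenspace_iff.1 hu]
      push_cast
      module
    · simp [hB_zero j hj v hv]
  · have hNv : (N ^ k) v ∈ eigenspace H ((j - 2 * k : ℤ) : ℂ) :=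
      apply_mem_eigenspace_of_lie_eq_smul (lie_pow_eq_smul hHN k) (by push_cast; ring) hv
    rw [Ring.lie_def, LinearMap.sub_apply, mul_apply, mul_apply]
    congr 1
    · split_ifs with hj
      · exact hBN v (by simpa [hj] using hv)
      · exact hB_zero _ (by lia) _ hNv
    · split_ifs with hj
      · subst hj
        obtain ⟨u, hu, rfl⟩ := hsurj v hv
        rw [hBN u hu]
      · rw [hB_zero j hj v hv, map_zero]

theorem exists_raising (hW : IsMonodromyWeightFiltration N W) (hG : IsGrading H W)
    (hHN : ⁅H, N⁆ = (-2 : ℂ) • N) : ∃ P : Module.End ℂ V, ⁅H, P⁆ = (2 : ℂ) • P ∧ ⁅P, N⁆ = H := by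
  choose B hHB hBN using hW.exists_lie_pow_apply_eq hG hHN
  obtain ⟨d, hbot, htop⟩ := hW.2.1
  let Q (k : ℕ) : Module.End ℂ V := ∑ i ∈ Finset.range k, N ^ i * B k * N ^ (k - 1 - i)
  have hHQ (k : ℕ) : ⁅H, Q k⁆ = (2 : ℂ) • Q k := by
    rw [lie_sum_pow_mul_mul_pow_eq_smul hHN (hHB k)]
    congr 1
    ring
  have hQN (k : ℕ) : ⁅Q k, N⁆ = ⁅B k, N ^ k⁆ := lie_sum_pow_mul_mul_pow N (B k) k
  refine ⟨∑ k ∈ Finset.range (d + 1), (k : ℂ) • Q k, ?_, ?_⟩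
  · simp only [lie_sum, lie_smul, hHQ, Finset.smul_sum, smul_comm (2 : ℂ)]
  · simp only [sum_lie, smul_lie, hQN]
    refine hG.endomorphism_ext hbot (htop d le_rfl) fun j v hv => ?_
    rcases le_or_gt j.natAbs d with hj | hj
    · simp only [LinearMap.sum_apply, LinearMap.smul_apply, hBN _ j v hv,
        sum_range_smul_ite_sub_ite hj, mem_eigenspace_iff.1 hv]
    · have hv_zero : v = 0 := by
        rw [← Submodule.mem_bot ℂ]
        rcases lt_or_ge j 0 with hneg | hpos
        · rwa [← hG.eigenspace_eq_bot_of_eq_bot (hbot j (by lia))]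
        · rwa [← hG.eigenspace_eq_bot_of_sub_one_eq_top (htop (j - 1) (by lia))]
      rw [hv_zero, map_zero, map_zero]

end IsMonodromyWeightFiltration

theorem gradings_biject_with_sl2_reps_general (N : Module.End ℂ V) (W : ℤ → Submodule ℂ V)
    (hW : IsMonodromyWeightFiltration N W) :
    Set.BijOn (fun p : Module.End ℂ V × Module.End ℂ V => p.1)
      {p | ⁅p.1, p.2⁆ = (2 : ℂ) • p.2 ∧ ⁅p.1, N⁆ = (-2 : ℂ) • N ∧ ⁅p.2, N⁆ = p.1}
      {H | IsGrading H W ∧ ⁅H, N⁆ = (-2 : ℂ) • N} := by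
  refine ⟨fun p ⟨_, hHN, hPN⟩ => ⟨hW.isGrading_of_lie_eq hHN hPN, hHN⟩, ?_, ?_⟩
  · rintro ⟨H, P⟩ ⟨hHP, hHN, hPN⟩ ⟨_, P'⟩ ⟨hHP', -, hPN'⟩ rfl
    have hG := hW.isGrading_of_lie_eq hHN hPN
    exact congrArg (Prod.mk H) (hW.raising_unique hG hHP hHP' (hPN.trans hPN'.symm))
  · rintro H ⟨hG, hHN⟩
    obtain ⟨P, hHP, hPN⟩ := hW.exists_raising hG hHN
    exact ⟨(H, P), ⟨hHP, hHN, hPN⟩, rfl⟩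

/-- Bijective correspondence between gradings `H` of the monodromy weight filtration
`W(N)` with `[H, N] = -2N` and sl₂(ℂ)-representations `ρ` with `ρ(n₋) = N`.
A representation with `ρ(n₋) = N` is encoded by the pair `p = (ρ(y), ρ(n₊))`
subject to the standard commutator relations, and the bijection sends `ρ` to
`H = ρ(y) = p.1`. -/
theorem gradings_biject_with_sl2_reps
    [FiniteDimensional ℂ V] (N : Module.End ℂ V)
    (hnil : IsNilpotent N) (hne : N ≠ 0)
    (W : ℤ → Submodule ℂ V) (hW : IsMonodromyWeightFiltration N W) :
    Set.BijOn (fun p : Module.End ℂ V × Module.End ℂ V => p.1)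
      {p | ⁅p.1, p.2⁆ = (2 : ℂ) • p.2 ∧ ⁅p.1, N⁆ = (-2 : ℂ) • N ∧ ⁅p.2, N⁆ = p.1}
      {H | IsGrading H W ∧ ⁅H, N⁆ = (-2 : ℂ) • N} :=
  gradings_biject_with_sl2_reps_general N W hW
end
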